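/- For an invertible RDS φ on 𝕊¹, the probability ℙ(Ω_c) of the set of contractive sample points is equal to either 0 or 1. -/

import Mathlib

open MeasureTheory Filter Topology Set ENNReal

noncomputable section

/-- The natural projection `π : ℝ → 𝕊¹ = ℝ/ℤ`. -/
def circleProj (x : ℝ) : UnitAddCircle := (x : UnitAddCircle)

/-- `f` is an orientation-preserving homeomorphism of the circle: it admits a strictly
monotone degree-one lift. -/
def OrientPreserving (f : UnitAddCircle ≃ₜ UnitAddCircle) : Prop :=
  ∃ F : ℝ → ℝ, StrictMono F ∧ (∀ x : ℝ, F (x + 1) = F x + 1) ∧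
    ∀ x : ℝ, f (circleProj x) = circleProj (F x)

/-- The anticlockwise distance `d₊(x,y) = min {r ≥ 0 : π(x' + r) = y}` (`x'` any lift of `x`). -/
def dPlus (x y : UnitAddCircle) : ℝ :=
  sInf {r : ℝ | 0 ≤ r ∧ ∃ x' : ℝ, circleProj x' = x ∧ circleProj (x' + r) = y}

/-- An invertible random dynamical system on the circle, in discrete or continuous time,
driven by a stationary memoryless noise process. -/
structure RDS (Ω : Type) [m : MeasurableSpace Ω] where
  /-- the time set `𝕋⁺`: either `ℕ ∪ {0}` or `[0,∞)`, viewed inside `ℝ` -/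
  T : Set ℝ
  T_cases : T = Set.range (fun n : ℕ => (n : ℝ)) ∨ T = Set.Ici (0 : ℝ)
  /-- the filtration -/
  F : ℝ → MeasurableSpace Ω
  F_le : ∀ t ∈ T, F t ≤ m
  F_mono : ∀ s ∈ T, ∀ t ∈ T, s ≤ t → F s ≤ F t
  /-- the probability measure -/
  P : Measure Ω
  P_prob : IsProbabilityMeasure P
  /-- the time-shift maps on the noise space -/
  θ : ℝ → Ω → Ω
  θ_zero : θ 0 = id
  θ_add : ∀ s ∈ T, ∀ t ∈ T, θ (s + t) = θ t ∘ θ s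
  θ_preserving : ∀ t ∈ T, MeasurePreserving (θ t) P P
  θ_adapted : ∀ s ∈ T, ∀ t ∈ T, @Measurable Ω Ω (F (s + t)) (F s) (θ t)
  θ_indep : ∀ t ∈ T, ∀ E A : Set Ω, MeasurableSet[F t] E →
    MeasurableSet[⨆ s ∈ T, F s] A → P (E ∩ θ t ⁻¹' A) = P E * P A
  /-- the random homeomorphisms -/
  φ : ℝ → Ω → UnitAddCircle ≃ₜ UnitAddCircle
  φ_orient : ∀ t ∈ T, ∀ ω, OrientPreserving (φ t ω)
  φ_meas : ∀ t ∈ T, @Measurable (Ω × UnitAddCircle) UnitAddCircle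
    ((F t).prod inferInstance) inferInstance (fun p => φ t p.1 p.2)
  φ_zero : ∀ ω, φ 0 ω = Homeomorph.refl UnitAddCircle
  φ_cocycle : ∀ s ∈ T, ∀ t ∈ T, ∀ ω x, φ (s + t) ω x = φ t (θ s ω) (φ s ω x)
  φ_cadlag_right : ∀ ω, ∀ t ∈ T, ∀ tn : ℕ → ℝ, (∀ n, tn n ∈ T) → Antitone tn →
    Tendsto tn atTop (𝓝 t) → ∀ (xn : ℕ → UnitAddCircle) (x : UnitAddCircle),
      Tendsto xn atTop (𝓝 x) →
      Tendsto (fun n => φ (tn n) ω (xn n)) atTop (𝓝 (φ t ω x))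
  /-- the left-limit maps -/
  φ_left_lim : ℝ → Ω → UnitAddCircle → UnitAddCircle
  φ_cadlag_left : ∀ ω, ∀ t ∈ T, ∀ tn : ℕ → ℝ, (∀ n, tn n ∈ T) → StrictMono tn →
    Tendsto tn atTop (𝓝 t) → ∀ (xn : ℕ → UnitAddCircle) (x : UnitAddCircle),
      Tendsto xn atTop (𝓝 x) →
      Tendsto (fun n => φ (tn n) ω (xn n)) atTop (𝓝 (φ_left_lim t ω x))

/-- A probability measure on the circle is atomless if every singleton is null. -/
def Atomless (ρ : Measure UnitAddCircle) : Prop := ∀ x, ρ {x} = 0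

/-- A measure on the circle has full support. -/
def FullSupport (ρ : Measure UnitAddCircle) : Prop :=
  ∀ U : Set UnitAddCircle, IsOpen U → U.Nonempty → 0 < ρ U

/-- The (topological) support of a measure on the circle. -/
def msupport (ρ : Measure UnitAddCircle) : Set UnitAddCircle :=
  {x | ∀ U : Set UnitAddCircle, IsOpen U → x ∈ U → 0 < ρ U}

namespace RDS

variable {Ω : Type} [m : MeasurableSpace Ω] (S : RDS Ω)

/-- the future σ-algebra `𝓕₊ = σ(𝓕_t : t ∈ 𝕋⁺)`. -/
def Fplus : MeasurableSpace Ω := ⨆ t ∈ S.T, S.F t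

/-- The filter "t → ∞ along the time set 𝕋⁺". -/
def tFilter : Filter ℝ := atTop ⊓ 𝓟 S.T

/-- two-point contractibility. -/
def Contractible : Prop := ∀ x y : UnitAddCircle, x ≠ y →
  0 < S.P {ω | ∃ t ∈ S.T, dist (S.φ t ω x) (S.φ t ω y) < dist x y}

/-- compressibility. -/
def Compressible : Prop := ∀ x y : UnitAddCircle, x ≠ y →
  0 < S.P {ω | ∃ t ∈ S.T, dPlus (S.φ t ω x) (S.φ t ω y) < dPlus x y}

/-- `p` is a deterministic fixed point. -/
def DetFixedPoint (p : UnitAddCircle) : Prop :=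
  ∀ᵐ ω ∂S.P, ∀ t ∈ S.T, S.φ t ω p = p

/-- `A` is forward-invariant. -/
def ForwardInvariant (A : Set UnitAddCircle) : Prop :=
  ∀ᵐ ω ∂S.P, ∀ t ∈ S.T, ⇑(S.φ t ω) '' A ⊆ A

/-- reverse-minimal dynamics: the only open forward-invariant sets are `∅` and `𝕊¹`. -/
def ReverseMinimal : Prop :=
  ∀ A : Set UnitAddCircle, IsOpen A → S.ForwardInvariant A → A = ∅ ∨ A = Set.univ

/-- synchronisation. -/
def Synchronising : Prop := ∀ x y : UnitAddCircle,
  S.P {ω | Tendsto (fun t => dist (S.φ t ω x) (S.φ t ω y)) S.tFilter (𝓝 0)} = 1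

/-- everywhere local stability. -/
def EverywhereLocallyStable : Prop := ∀ x : UnitAddCircle,
  S.P {ω | ∃ U : Set UnitAddCircle, IsOpen U ∧ x ∈ U ∧
    Tendsto (fun t => volume (⇑(S.φ t ω) '' U)) S.tFilter (𝓝 0)} = 1

/-- stable synchronisation. -/
def StablySynchronising : Prop := S.Synchronising ∧ S.EverywhereLocallyStable

/-- `ρ` is reverse-stationary: `ρ(A) = ∫ ρ(φ(t,ω)A) ℙ(dω)` for all `t ∈ 𝕋⁺`, Borel `A`. -/
def ReverseStationary (ρ : Measure UnitAddCircle) : Prop :=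
  ∀ t ∈ S.T, ∀ A : Set UnitAddCircle, MeasurableSet A →
    ρ A = ∫⁻ ω, ρ (⇑(S.φ t ω) '' A) ∂S.P

/-- `r` is a crack point of `ω`. -/
def CrackPoint (ω : Ω) (r : UnitAddCircle) : Prop :=
  ∀ G : Set UnitAddCircle, IsClosed G → r ∉ G →
    Tendsto (fun t => volume (⇑(S.φ t ω) '' G)) S.tFilter (𝓝 0)

/-- the set of contractive sample points. -/
def Ωc : Set Ω := {ω | ∃ r, S.CrackPoint ω r}

/-- the reverse transition probabilities `φ̄ₓᵗ(A) = ℙ(ω : φ(t,ω)⁻¹(x) ∈ A)`. -/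
def revTrans (t : ℝ) (x : UnitAddCircle) (A : Set UnitAddCircle) : ℝ≥0∞ :=
  S.P {ω | (S.φ t ω).symm x ∈ A}

/-- the forward transition probabilities `φₓᵗ(A) = ℙ(ω : φ(t,ω)x ∈ A)`. -/
def fwdTrans (t : ℝ) (x : UnitAddCircle) (A : Set UnitAddCircle) : ℝ≥0∞ :=
  S.P {ω | S.φ t ω x ∈ A}

/-- `ρ` is stationary for a transition family `ν`. -/
def StationaryFor (ν : ℝ → UnitAddCircle → Set UnitAddCircle → ℝ≥0∞)
    (ρ : Measure UnitAddCircle) : Prop :=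
  ∀ t ∈ S.T, ∀ A : Set UnitAddCircle, MeasurableSet A → ρ A = ∫⁻ x, ν t x A ∂ρ

/-- `ρ` is ergodic for a transition family `ν`. -/
def ErgodicFor (ν : ℝ → UnitAddCircle → Set UnitAddCircle → ℝ≥0∞)
    (ρ : Measure UnitAddCircle) : Prop :=
  S.StationaryFor ν ρ ∧ ∀ A : Set UnitAddCircle, MeasurableSet A →
    (∀ t ∈ S.T, ∀ᵐ x ∂ρ, x ∈ A → ν t x A = 1) → ρ A = 0 ∨ ρ A = 1

end RDS

/-- Measurability of the volume of the image of the complement of a compact set. -/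
theorem aux_meas_vol {Ω : Type} [MeasurableSpace Ω]
    (f : Ω → UnitAddCircle ≃ₜ UnitAddCircle)
    (hf : Measurable (fun p : Ω × UnitAddCircle => f p.1 p.2))
    (K : Set UnitAddCircle) (hK : IsClosed K) :
    Measurable (fun ω => volume (⇑(f ω) '' Kᶜ)) := by
  obtain ⟨D, hDK, hDc, hDd⟩ :=
    (TopologicalSpace.IsSeparable.of_separableSpace K).exists_countable_dense_subset
  have key : MeasurableSet {p : Ω × UnitAddCircle | p.2 ∈ ⇑(f p.1) '' K} := by
    have : {p : Ω × UnitAddCircle | p.2 ∈ ⇑(f p.1) '' K} =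
        ⋂ n : ℕ, ⋃ q ∈ D, {p : Ω × UnitAddCircle | dist p.2 (f p.1 q) < 1 / ((n : ℝ) + 1)} := by
      ext ⟨ω, y⟩
      simp only [mem_setOf_eq, mem_iInter, mem_iUnion, exists_prop]
      constructor
      · intro hy n
        have h1 : y ∈ closure (f ω '' D) := by
          obtain ⟨x, hx, rfl⟩ := hy
          exact image_closure_subset_closure_image (f ω).continuous ⟨x, hDd hx, rfl⟩
        obtain ⟨_, ⟨q, hq, rfl⟩, h⟩ := Metric.mem_closure_iff.1 h1 _ (Nat.one_div_pos_of_nat (n := n))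
        exact ⟨q, hq, h⟩
      · intro h
        have hc : IsClosed (f ω '' K) := (f ω).isClosed_image.2 hK
        rw [← hc.closure_eq, Metric.mem_closure_iff]
        intro ε hε
        obtain ⟨n, hn⟩ := exists_nat_one_div_lt hε
        obtain ⟨q, hq, h⟩ := h n
        exact ⟨_, ⟨q, hDK hq, rfl⟩, h.trans hn⟩
    rw [this]
    refine MeasurableSet.iInter fun n => MeasurableSet.biUnion hDc fun q _ => ?_
    have hq : Measurable (fun p : Ω × UnitAddCircle => f p.1 q) :=
      hf.comp (measurable_fst.prodMk measurable_const)
    exact measurableSet_lt (measurable_snd.dist hq) measurable_const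
  have := measurable_measure_prodMk_left (ν := (volume : Measure UnitAddCircle)) key.compl
  convert this using 3 with ω
  ext y
  rw [image_compl_eq (f ω).bijective]
  rfl

namespace RDS

variable {Ω : Type} [m : MeasurableSpace Ω] (S : RDS Ω)

theorem aux_nonneg {t : ℝ} (ht : t ∈ S.T) : 0 ≤ t := by
  rcases S.T_cases with h | h <;> rw [h] at ht
  · obtain ⟨n, rfl⟩ := ht
    positivity
  · exact ht

theorem aux_add {s t : ℝ} (hs : s ∈ S.T) (ht : t ∈ S.T) : s + t ∈ S.T := by
  rcases S.T_cases with h | h <;> rw [h] at hs ht ⊢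
  · obtain ⟨a, rfl⟩ := hs
    obtain ⟨b, rfl⟩ := ht
    exact ⟨a + b, by push_cast; rfl⟩
  · exact mem_Ici.2 (add_nonneg (mem_Ici.1 hs) (mem_Ici.1 ht))

theorem aux_sub {s t : ℝ} (hs : s ∈ S.T) (ht : t ∈ S.T) (hst : s ≤ t) : t - s ∈ S.T := by
  rcases S.T_cases with h | h <;> rw [h] at hs ht ⊢
  · obtain ⟨a, rfl⟩ := hs
    obtain ⟨b, rfl⟩ := ht
    have hab : a ≤ b := by
      simp only at hst
      exact_mod_cast hst
    exact ⟨b - a, by push_cast [hab]; rfl⟩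
  · exact sub_nonneg.2 hst

/-- lower semicontinuity from the right -/
theorem aux_lsc (ω : Ω) {t : ℝ} (ht : t ∈ S.T) (tn : ℕ → ℝ) (htn : ∀ n, tn n ∈ S.T)
    (ha : Antitone tn) (hl : Tendsto tn atTop (𝓝 t)) (U : Set UnitAddCircle) (hU : IsOpen U)
    (c : ℝ≥0∞) (hc : ∀ n, volume (⇑(S.φ (tn n) ω) '' U) ≤ c) :
    volume (⇑(S.φ t ω) '' U) ≤ c := by
  have hsub : ⇑(S.φ t ω) '' U ⊆ ⋃ N : ℕ, ⋂ n ≥ N, ⇑(S.φ (tn n) ω) '' U := by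
    rintro _ ⟨x, hx, rfl⟩
    set y := S.φ t ω x with hy
    by_contra hcon
    simp only [mem_iUnion, mem_iInter, not_exists, not_forall] at hcon
    have hfr : ∃ᶠ n in atTop, y ∉ ⇑(S.φ (tn n) ω) '' U := by
      rw [frequently_atTop]
      intro N
      obtain ⟨n, hn, h⟩ := hcon N
      exact ⟨n, hn, h⟩
    obtain ⟨ψ, hψ, hψU⟩ := extraction_of_frequently_atTop hfr
    obtain ⟨x', -, χ, hχ, hlim⟩ := (isCompact_univ (X := UnitAddCircle)).tendsto_subseq
      (x := fun k => (S.φ (tn (ψ k)) ω).symm y) (fun _ => mem_univ _)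
    have h1 := S.φ_cadlag_right ω t ht (fun k => tn (ψ (χ k))) (fun k => htn _)
      (ha.comp_monotone (hψ.monotone.comp hχ.monotone))
      (hl.comp (hψ.tendsto_atTop.comp hχ.tendsto_atTop)) _ x' hlim
    have h2 : y = S.φ t ω x' := by
      refine tendsto_nhds_unique ?_ h1
      simp only [Function.comp_apply, Homeomorph.apply_symm_apply]
      exact tendsto_const_nhds
    have h3 : x = x' := (S.φ t ω).injective h2
    subst h3
    have h4 := hlim.eventually (hU.mem_nhds hx)
    obtain ⟨k, hk⟩ := h4.exists
    exact hψU (χ k) ⟨_, hk, by simp⟩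
  refine (measure_mono hsub).trans ?_
  rw [Monotone.measure_iUnion]
  · refine iSup_le fun N => (measure_mono ?_).trans (hc N)
    exact biInter_subset_of_mem (show N ∈ {n | n ≥ N} from le_refl N)
  · intro a b hab
    exact biInter_subset_biInter_left fun n hn => le_trans hab hn

theorem aux_tendsto_iff (ω : Ω) (U : Set UnitAddCircle) (hU : IsOpen U) :
    Tendsto (fun t => volume (⇑(S.φ t ω) '' U)) S.tFilter (𝓝 0) ↔
      ∀ k : ℕ, ∃ N : ℕ, ∀ q : ℚ, (q : ℝ) ∈ S.T → (N : ℝ) ≤ q →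
        volume (⇑(S.φ q ω) '' U) ≤ ((k : ℝ≥0∞) + 1)⁻¹ := by
  rw [ENNReal.tendsto_nhds_zero]
  unfold tFilter
  simp only [eventually_inf_principal]
  constructor
  · intro h k
    obtain ⟨a, ha⟩ := eventually_atTop.1 (h ((k : ℝ≥0∞) + 1)⁻¹
      (ENNReal.inv_pos.2 (by finiteness)))
    obtain ⟨N, hN⟩ := exists_nat_ge a
    exact ⟨N, fun q hq hNq => ha _ (hN.trans hNq) hq⟩
  · intro h ε hε
    obtain ⟨k, hk⟩ := ENNReal.exists_inv_nat_lt hε.ne'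
    obtain ⟨N, hN⟩ := h k
    refine eventually_atTop.2 ⟨N, fun t htN ht => ?_⟩
    refine le_trans ?_ (le_trans (ENNReal.inv_le_inv.2 (le_self_add)) hk.le : ((k : ℝ≥0∞) + 1)⁻¹ ≤ ε)
    rcases S.T_cases with hT | hT
    · have ht' := ht
      rw [hT] at ht'
      obtain ⟨n, rfl⟩ := ht'
      have := hN (n : ℚ) (by push_cast; exact ht) (by push_cast; exact htN)
      simpa using this
    · obtain ⟨u, hu, hmem, hlim⟩ :=
        Dense.exists_seq_strictAnti_tendsto (s := Set.range ((↑) : ℚ → ℝ))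
          Rat.isDenseEmbedding_coe_real.dense t
      have ht0 := S.aux_nonneg ht
      have huT : ∀ n, u n ∈ S.T := fun n => by
        rw [hT]; exact ht0.trans (hmem n).1.le
      refine S.aux_lsc ω ht u huT hu.antitone hlim U hU _ fun n => ?_
      obtain ⟨q, hq⟩ := (hmem n).2
      rw [← hq]
      exact hN q (hq ▸ huT n) (by rw [hq]; exact le_trans htN (hmem n).1.le)

theorem aux_Ωc_eq : S.Ωc = ⋂ n : ℕ, ⋃ j : ℕ, {ω | Tendsto (fun t => volume (⇑(S.φ t ω) ''
      (Metric.closedBall (TopologicalSpace.denseSeq UnitAddCircle j) (1 / ((n : ℝ) + 1)))ᶜ))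
      S.tFilter (𝓝 0)} := by
  ext ω
  simp only [Ωc, mem_setOf_eq, mem_iInter, mem_iUnion]
  constructor
  · rintro ⟨r, hr⟩ n
    obtain ⟨j, hj⟩ := (TopologicalSpace.denseRange_denseSeq UnitAddCircle).exists_dist_lt r
      (Nat.one_div_pos_of_nat (α := ℝ) (n := n))
    refine ⟨j, ?_⟩
    have h := hr (Metric.ball (TopologicalSpace.denseSeq UnitAddCircle j) (1 / ((n : ℝ) + 1)))ᶜ
      Metric.isOpen_ball.isClosed_compl (by simpa using hj)
    refine tendsto_of_tendsto_of_tendsto_of_le_of_le tendsto_const_nhds h (fun _ => zero_le)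
      fun t => measure_mono (image_mono (compl_subset_compl.2 Metric.ball_subset_closedBall))
  · intro h
    choose j hj using h
    obtain ⟨r, -, χ, hχ, hlim⟩ := (isCompact_univ (X := UnitAddCircle)).tendsto_subseq
      (x := fun n => TopologicalSpace.denseSeq UnitAddCircle (j n)) (fun _ => mem_univ _)
    refine ⟨r, fun G hG hr => ?_⟩
    obtain ⟨ε, hε, hball⟩ := Metric.isOpen_iff.1 hG.isOpen_compl r hr
    have h1 : ∀ᶠ n in atTop, dist (TopologicalSpace.denseSeq UnitAddCircle (j (χ n))) r < ε / 2 :=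
      (Metric.tendsto_nhds.1 hlim) (ε / 2) (half_pos hε)
    have h2 : ∀ᶠ n in atTop, 1 / (((χ n : ℕ) : ℝ) + 1) < ε / 2 :=
      (tendsto_one_div_add_atTop_nhds_zero_nat.comp hχ.tendsto_atTop).eventually
        (gt_mem_nhds (half_pos hε))
    obtain ⟨n, hn1, hn2⟩ := (h1.and h2).exists
    refine tendsto_of_tendsto_of_tendsto_of_le_of_le tendsto_const_nhds (hj (χ n))
      (fun _ => zero_le) fun t => measure_mono (image_mono ?_)
    rw [subset_compl_comm]
    intro z hz
    apply hball
    rw [Metric.mem_closedBall] at hz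
    rw [Metric.mem_ball]
    linarith [dist_triangle z (TopologicalSpace.denseSeq UnitAddCircle (j (χ n))) r]

theorem aux_Ωc_meas : MeasurableSet[⨆ s ∈ S.T, S.F s] S.Ωc := by
  rw [aux_Ωc_eq]
  refine MeasurableSet.iInter fun n => MeasurableSet.iUnion fun j => ?_
  set K := Metric.closedBall (TopologicalSpace.denseSeq UnitAddCircle j) (1 / ((n : ℝ) + 1)) with hKdef
  have hK : IsClosed K := Metric.isClosed_closedBall
  simp only [S.aux_tendsto_iff _ _ hK.isOpen_compl]
  simp only [setOf_forall, setOf_exists]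
  refine MeasurableSet.iInter fun k => MeasurableSet.iUnion fun N => MeasurableSet.iInter fun q =>
    MeasurableSet.iInter fun hq => MeasurableSet.iInter fun _ => ?_
  have hle : S.F q ≤ ⨆ s ∈ S.T, S.F s := le_iSup₂_of_le (q : ℝ) hq le_rfl
  apply hle
  have := @aux_meas_vol Ω (S.F q) (S.φ q) (S.φ_meas q hq) K hK
  exact this measurableSet_Iic

theorem aux_invariant {s : ℝ} (hs : s ∈ S.T) : S.θ s ⁻¹' S.Ωc = S.Ωc := by
  have himg : ∀ t ∈ S.T, ∀ ω, ∀ G : Set UnitAddCircle,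
      ⇑(S.φ (s + t) ω) '' G = ⇑(S.φ t (S.θ s ω)) '' (⇑(S.φ s ω) '' G) := by
    intro t ht ω G
    rw [image_image]
    exact image_congr fun x _ => S.φ_cocycle s hs t ht ω x
  have hs0 := S.aux_nonneg hs
  ext ω
  constructor
  · rintro ⟨r, hr⟩
    refine ⟨(S.φ s ω).symm r, fun G hG hrG => ?_⟩
    have h := hr (⇑(S.φ s ω) '' G) ((S.φ s ω).isClosed_image.2 hG) (by
      rintro ⟨x, hx, rfl⟩
      exact hrG (by simpa using hx))
    have hsh : Tendsto (fun t => t - s) S.tFilter S.tFilter := by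
      refine tendsto_inf.2 ⟨(tendsto_atTop_add_const_right _ (-s) tendsto_id).mono_left inf_le_left,
        tendsto_principal.2 ?_⟩
      unfold tFilter
      rw [eventually_inf_principal]
      filter_upwards [eventually_ge_atTop s] with t h1 h2 using S.aux_sub hs h2 h1
    refine (h.comp hsh).congr' ?_
    unfold tFilter
    rw [EventuallyEq, eventually_inf_principal]
    filter_upwards [eventually_ge_atTop s] with t h1 h2
    rw [Function.comp_apply, ← himg _ (S.aux_sub hs h2 h1), add_sub_cancel]
  · rintro ⟨r, hr⟩
    refine ⟨S.φ s ω r, fun G hG hrG => ?_⟩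
    have h := hr (⇑(S.φ s ω) ⁻¹' G) (hG.preimage (S.φ s ω).continuous) hrG
    have hsh : Tendsto (fun t => s + t) S.tFilter S.tFilter := by
      refine tendsto_inf.2 ⟨(tendsto_atTop_add_const_left _ s tendsto_id).mono_left inf_le_left,
        tendsto_principal.2 ?_⟩
      unfold tFilter
      rw [eventually_inf_principal]
      exact Eventually.of_forall fun t h2 => S.aux_add hs h2
    refine (h.comp hsh).congr' ?_
    unfold tFilter
    rw [EventuallyEq, eventually_inf_principal]
    refine Eventually.of_forall fun t h2 => ?_
    rw [Function.comp_apply, himg _ h2, image_preimage_eq _ (S.φ s ω).surjective]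

theorem aux_zero_one : S.P S.Ωc = 0 ∨ S.P S.Ωc = 1 := by
  haveI := S.P_prob
  have hle : (⨆ s ∈ S.T, S.F s) ≤ m := iSup₂_le fun t ht => S.F_le t ht
  have hind : ∀ t ∈ S.T, ∀ E, MeasurableSet[S.F t] E → S.P (E ∩ S.Ωc) = S.P E * S.P S.Ωc := by
    intro t ht E hE
    have := S.θ_indep t ht E S.Ωc hE S.aux_Ωc_meas
    rwa [S.aux_invariant ht] at this
  let C : Set (Set Ω) := {E | ∃ t ∈ S.T, MeasurableSet[S.F t] E}
  have hgen : (⨆ s ∈ S.T, S.F s) = MeasurableSpace.generateFrom C := by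
    apply le_antisymm
    · refine iSup₂_le fun t ht E hE => MeasurableSpace.measurableSet_generateFrom ⟨t, ht, hE⟩
    · refine MeasurableSpace.generateFrom_le ?_
      rintro E ⟨t, ht, hE⟩
      exact (le_iSup₂_of_le t ht le_rfl : S.F t ≤ ⨆ s ∈ S.T, S.F s) _ hE
  have hpi : IsPiSystem C := by
    rintro A ⟨s, hs, hA⟩ B ⟨t, ht, hB⟩ -
    rcases le_total s t with h | h
    · exact ⟨t, ht, MeasurableSet.inter (S.F_mono s hs t ht h _ hA) hB⟩
    · exact ⟨s, hs, MeasurableSet.inter hA (S.F_mono t ht s hs h _ hB)⟩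
  have hall : ∀ E, MeasurableSet[⨆ s ∈ S.T, S.F s] E →
      S.P (E ∩ S.Ωc) = S.P E * S.P S.Ωc := by
    intro E hE
    induction E, hE using MeasurableSpace.induction_on_inter hgen hpi with
    | empty => simp
    | basic E hE =>
      obtain ⟨t, ht, hE⟩ := hE
      exact hind t ht E hE
    | compl E hE ih =>
      have hE' := hle _ hE
      have h1 : S.P (E ∩ S.Ωc) + S.P (Eᶜ ∩ S.Ωc) = S.P S.Ωc := by
        rw [inter_comm E, inter_comm Eᶜ, ← diff_eq]
        exact measure_inter_add_diff _ hE'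
      have h2 : S.P E * S.P S.Ωc + S.P Eᶜ * S.P S.Ωc = S.P S.Ωc := by
        rw [← add_mul, measure_add_measure_compl hE', measure_univ, one_mul]
      rw [ih] at h1
      exact (ENNReal.add_right_inj (by finiteness)).1 (h1.trans h2.symm)
    | iUnion f hd hf ih =>
      rw [iUnion_inter, measure_iUnion (fun i j hij => (hd hij).mono inter_subset_left inter_subset_left)
        (fun i => (hle _ (hf i)).inter (hle _ S.aux_Ωc_meas)),
        measure_iUnion hd (fun i => hle _ (hf i)), ← ENNReal.tsum_mul_right]
      exact tsum_congr ih
  have h := hall _ S.aux_Ωc_meas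
  rw [inter_self] at h
  by_cases h0 : S.P S.Ωc = 0
  · exact Or.inl h0
  · right
    have h' : S.P S.Ωc * 1 = S.P S.Ωc * S.P S.Ωc := by rw [mul_one]; exact h
    exact ((ENNReal.mul_right_inj h0 (by finiteness)).1 h').symm

end RDS

/-- the probability of the set of contractive sample points is `0` or `1`. -/
theorem prob_contractive_zero_or_one
    {Ω : Type} [MeasurableSpace Ω] (S : RDS Ω) :
    S.P S.Ωc = 0 ∨ S.P S.Ωc = 1 := by
  exact S.aux_zero_one
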